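/- arXiv:1812.04086 — 2 statements merged into one kernel-verified Lean document; each statement's English description precedes it below -/
import Mathlib

section
/- Fix a finite horizon T > 0, a nonnegative Radon measure μ̃ on [0,T], and a convex normal integrand h̃ : [0,T] × ℝ^d → ℝ ∪ {±∞}. Let S̃_t := cl dom h̃_t and D_l(S̃) := {y ∈ D_l | y_t ∈ S̃_t for all t ∈ [0,T]}. Assume: (i) S̃_t = cl{y_t | y ∈ D_l(S̃)} for every t ∈ [0,T], and (ii) D_l(S̃) = cl(dom I_{h̃} ∩ D_l(S̃)), the closure taken in the supremum norm. If inf_{y∈D_l(S̃)} I_{h̃}(y) < +∞, then inf_{y∈D_l(S̃)} I_{h̃}(y) = ∫_{[0,T]} inf_{x∈ℝ^d} h̃_t(x) dμ̃(t). -/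
open MeasureTheory Filter Set Topology
open scoped ENNReal Classical

/-- The positive part of an extended real, as an extended nonnegative real. -/
noncomputable def erealPos (a : EReal) : ℝ≥0∞ := if a = ⊤ then ⊤ else ENNReal.ofReal a.toReal

/-- The integral of an extended-real-valued function, defined as `+∞` unless the
positive part is integrable. -/
noncomputable def eIntegral {α : Type*} [MeasurableSpace α] (μ : Measure α)
    (f : α → EReal) : EReal :=
  if ∫⁻ a, erealPos (f a) ∂μ = ⊤ then ⊤
  else ((∫⁻ a, erealPos (f a) ∂μ : ℝ≥0∞) : EReal) - ((∫⁻ a, erealPos (-f a) ∂μ : ℝ≥0∞) : EReal)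

/-- Euclidean space `ℝ^d`. -/
abbrev Euc (d : ℕ) := EuclideanSpace ℝ (Fin d)

/-- A function `[0,T] → ℝ^d` (modelled on `ℝ`) is càglàd: left-continuous on `(0,T]`
with right limits on `[0,T)`. -/
def IsCagladOn (T : ℝ) {d : ℕ} (y : ℝ → Euc d) : Prop :=
  (∀ t ∈ Set.Ioc (0:ℝ) T, Tendsto y (𝓝[<] t) (𝓝 (y t))) ∧
  (∀ t ∈ Set.Ico (0:ℝ) T, ∃ l, Tendsto y (𝓝[>] t) (𝓝 l))

/-- `h : [0,T] × ℝ^d → ℝ ∪ {±∞}` is a convex normal integrand: its epigraphical mapping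
`t ⇒ {(x,α) | h t x ≤ α}` is closed convex-valued and measurable. -/
def IsConvexNormalIntegrand (T : ℝ) {d : ℕ} (h : ℝ → Euc d → EReal) : Prop :=
  (∀ t ∈ Set.Icc (0:ℝ) T, IsClosed {p : Euc d × ℝ | h t p.1 ≤ (p.2 : EReal)} ∧
      Convex ℝ {p : Euc d × ℝ | h t p.1 ≤ (p.2 : EReal)}) ∧
  (∀ O : Set (Euc d × ℝ), IsOpen O →
      MeasurableSet {t : ℝ | t ∈ Set.Icc (0:ℝ) T ∧ ∃ p ∈ O, h t p.1 ≤ (p.2 : EReal)})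

lemma erealPos_eq (a : EReal) : erealPos a = a.toENNReal := rfl

lemma key_id (g : EReal) (k : ℕ) :
    (g + (k : ℝ)).toENNReal + min (k : ℝ≥0∞) (-g).toENNReal = g.toENNReal + k := by
  induction g with
  | bot => simp
  | top => rw [EReal.top_add_coe]; simp
  | coe x =>
    rw [← EReal.coe_add, ← EReal.coe_neg]
    simp only [EReal.real_coe_toENNReal]
    have hk : (k : ℝ≥0∞) = ENNReal.ofReal k := by simp
    rw [hk, ← ENNReal.ofReal_min]
    have hk0 : (0:ℝ) ≤ k := by positivity
    rcases le_total 0 x with hx | hx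
    · rw [min_eq_right (by linarith), ENNReal.ofReal_of_nonpos (p := -x) (by linarith), add_zero,
        ENNReal.ofReal_add hx hk0]
    · rw [ENNReal.ofReal_of_nonpos hx, zero_add]
      rcases le_total (k:ℝ) (-x) with h1 | h1
      · rw [min_eq_left h1, ENNReal.ofReal_of_nonpos (by linarith), zero_add]
      · rw [min_eq_right h1, ← ENNReal.ofReal_add (by linarith) (by linarith)]
        congr 1; ring

lemma eIntegral_mono {α : Type*} [MeasurableSpace α] {μ : Measure α} {f g : α → EReal}
    (hfg : ∀ᵐ a ∂μ, f a ≤ g a) : eIntegral μ f ≤ eIntegral μ g := by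
  have h1 : ∫⁻ a, erealPos (f a) ∂μ ≤ ∫⁻ a, erealPos (g a) ∂μ :=
    lintegral_mono_ae (hfg.mono fun a h => EReal.toENNReal_le_toENNReal h)
  have h2 : ∫⁻ a, erealPos (-g a) ∂μ ≤ ∫⁻ a, erealPos (-f a) ∂μ :=
    lintegral_mono_ae (hfg.mono fun a h =>
      EReal.toENNReal_le_toENNReal (EReal.neg_le_neg_iff.2 h))
  unfold eIntegral
  by_cases hg : ∫⁻ a, erealPos (g a) ∂μ = ⊤
  · rw [if_pos hg]; exact le_top
  · have hf : ∫⁻ a, erealPos (f a) ∂μ ≠ ⊤ := ne_top_of_le_ne_top hg h1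
    rw [if_neg hg, if_neg hf]
    exact EReal.sub_le_sub (by exact_mod_cast h1) (by exact_mod_cast h2)

lemma eIntegral_lt_top {α : Type*} [MeasurableSpace α] {μ : Measure α} {f : α → EReal} :
    eIntegral μ f < ⊤ ↔ ∫⁻ a, (f a).toENNReal ∂μ ≠ ⊤ := by
  have e : ∀ a, erealPos (f a) = (f a).toENNReal := fun _ => rfl
  unfold eIntegral
  simp only [e]
  by_cases hg : ∫⁻ a, (f a).toENNReal ∂μ = ⊤
  · simp [hg]
  · rw [if_neg hg]
    simp only [ne_eq, hg, not_false_eq_true, iff_true]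
    lift ∫⁻ a, (f a).toENNReal ∂μ to NNReal using hg with p
    generalize ∫⁻ a, erealPos (-f a) ∂μ = n
    induction n with
    | top => simp
    | coe n => exact EReal.coe_lt_top ((p:ℝ) - n)

lemma shift_id {α : Type*} [MeasurableSpace α] {μ : Measure α} {f : α → EReal}
    (hf : AEMeasurable f μ) (k : ℕ) :
    ∫⁻ a, (f a + (k : ℝ)).toENNReal ∂μ + ∫⁻ a, min (k : ℝ≥0∞) (-f a).toENNReal ∂μ
      = ∫⁻ a, (f a).toENNReal ∂μ + k * μ univ := by
  rw [← lintegral_add_right', ← lintegral_const, ← lintegral_add_right']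
  · simp_rw [key_id]
  · fun_prop
  · have : AEMeasurable (fun a => - f a) μ := measurable_neg.comp_aemeasurable hf
    exact aemeasurable_const.min this.ereal_toENNReal

lemma eIntegral_step {α : Type*} [MeasurableSpace α] {μ : Measure α} [IsFiniteMeasure μ]
    {g : α → EReal} (hg : AEMeasurable g μ) (hgt : eIntegral μ g < ⊤) {β : EReal}
    (hβ : eIntegral μ g < β) :
    ∃ k : ℕ, ∃ ε : ℝ≥0∞, 0 < ε ∧ ∀ f : α → EReal, AEMeasurable f μ →
      ∫⁻ a, (f a + (k : ℝ)).toENNReal ∂μ ≤ ∫⁻ a, (g a + (k : ℝ)).toENNReal ∂μ + ε →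
      eIntegral μ f < β := by
  have hP := eIntegral_lt_top.1 hgt
  obtain ⟨b, hb1, hb2⟩ := EReal.lt_iff_exists_real_btwn.1 hβ
  -- find k
  have hmono : ∫⁻ a, erealPos (-g a) ∂μ = ⨆ k : ℕ, ∫⁻ a, min (k : ℝ≥0∞) (-g a).toENNReal ∂μ := by
    rw [← lintegral_iSup']
    · congr 1; ext a
      rw [erealPos_eq]
      apply le_antisymm
      · refine ENNReal.le_of_forall_pos_nnreal_lt ?_
        intro r hr hlt
        obtain ⟨n, hn⟩ := exists_nat_ge r
        have hn' : (r : ℝ≥0∞) ≤ (n : ℝ≥0∞) := by exact_mod_cast hn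
        exact le_trans (le_min hn' hlt.le)
          (le_iSup (fun n : ℕ => min (n : ℝ≥0∞) (-g a).toENNReal) n)
      · exact iSup_le fun n => min_le_right _ _
    · intro n
      have : AEMeasurable (fun a => - g a) μ := measurable_neg.comp_aemeasurable hg
      exact aemeasurable_const.min this.ereal_toENNReal
    · refine ae_of_all _ fun a n m hnm => ?_
      exact min_le_min_right _ (by exact_mod_cast hnm)
  have hQ : ∀ (f : α → EReal) (k : ℕ), ∫⁻ a, min (k : ℝ≥0∞) (-f a).toENNReal ∂μ ≠ ⊤ := by
    intro f k
    refine ne_top_of_le_ne_top ?_ (lintegral_mono fun a => min_le_left _ _)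
    rw [lintegral_const]
    exact ENNReal.mul_ne_top (by simp) (measure_ne_top _ _)
  have hk : ∃ k : ℕ, (∫⁻ a, (g a).toENNReal ∂μ).toReal
      - (∫⁻ a, min (k : ℝ≥0∞) (-g a).toENNReal ∂μ).toReal < b := by
    by_contra! hcon
    set P := ∫⁻ a, (g a).toENNReal ∂μ with hPd
    have hle : ∫⁻ a, erealPos (-g a) ∂μ ≤ ENNReal.ofReal (P.toReal - b) := by
      rw [hmono]
      refine iSup_le fun k => ?_
      rw [← ENNReal.ofReal_toReal (hQ g k)]
      exact ENNReal.ofReal_le_ofReal (by linarith [hcon k])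
    have h0 : 0 ≤ P.toReal - b := by
      have := hcon 0
      simp at this; linarith
    apply absurd hb1
    rw [not_lt]
    have e : ∀ a, erealPos (g a) = (g a).toENNReal := fun _ => rfl
    unfold eIntegral
    simp only [e]
    rw [if_neg hP, ← hPd]
    have hN : ∫⁻ a, erealPos (-g a) ∂μ ≠ ⊤ := ne_top_of_le_ne_top ENNReal.ofReal_ne_top hle
    have h3 := (ENNReal.toReal_le_toReal hN ENNReal.ofReal_ne_top).2 hle
    rw [ENNReal.toReal_ofReal h0] at h3
    rw [← EReal.coe_toReal (x := ((P : ℝ≥0∞) : EReal)) (by simpa using hP) (by simp),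
      ← EReal.coe_toReal (x := ((∫⁻ a, erealPos (-g a) ∂μ : ℝ≥0∞) : EReal)) (by simpa using hN)
        (by simp), ← EReal.coe_sub]
    simp only [EReal.toReal_coe_ennreal]
    exact_mod_cast (by linarith : b ≤ P.toReal - (∫⁻ a, erealPos (-g a) ∂μ).toReal)
  obtain ⟨k, hk⟩ := hk
  set Pg := ∫⁻ a, (g a).toENNReal ∂μ with hPg
  set Qg := ∫⁻ a, min (k : ℝ≥0∞) (-g a).toENNReal ∂μ with hQg
  refine ⟨k, ENNReal.ofReal (b - (Pg.toReal - Qg.toReal)), by simpa using hk, ?_⟩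
  intro f hf hle
  have i1 := shift_id hf k
  have i2 := shift_id hg k
  have hM : (k : ℝ≥0∞) * μ univ ≠ ⊤ := ENNReal.mul_ne_top (by simp) (measure_ne_top _ _)
  rw [← hPg, ← hQg] at i2
  set Ug := ∫⁻ a, (g a + (k : ℝ)).toENNReal ∂μ with hUg
  set Uf := ∫⁻ a, (f a + (k : ℝ)).toENNReal ∂μ with hUf
  set M := (k : ℝ≥0∞) * μ univ
  have hUgt : Ug ≠ ⊤ := by
    refine ne_top_of_le_ne_top (ENNReal.add_ne_top.2 ⟨hP, hM⟩) (?_ : Ug ≤ Pg + M)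
    rw [← i2]; exact le_self_add
  have hUft : Uf ≠ ⊤ := ne_top_of_le_ne_top (ENNReal.add_ne_top.2 ⟨hUgt, ENNReal.ofReal_ne_top⟩) hle
  have hQf := hQ f k
  have hPf : ∫⁻ a, (f a).toENNReal ∂μ ≠ ⊤ := by
    refine ne_top_of_le_ne_top (ENNReal.add_ne_top.2 ⟨hUft, hQf⟩) ?_
    rw [i1]; exact le_self_add
  have hQN : ∫⁻ a, min (k : ℝ≥0∞) (-f a).toENNReal ∂μ ≤ ∫⁻ a, erealPos (-f a) ∂μ :=
    lintegral_mono fun a => min_le_right _ _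
  set Pf := ∫⁻ a, (f a).toENNReal ∂μ with hPfd
  set Qf := ∫⁻ a, min (k : ℝ≥0∞) (-f a).toENNReal ∂μ
  refine lt_of_le_of_lt ?_ hb2
  have e : ∀ a, erealPos (f a) = (f a).toENNReal := fun _ => rfl
  unfold eIntegral
  simp only [e]
  rw [if_neg hPf, ← hPfd]
  have hQN' : (Qf : EReal) ≤ ((∫⁻ a, erealPos (-f a) ∂μ : ℝ≥0∞) : EReal) := by exact_mod_cast hQN
  refine le_trans (EReal.sub_le_sub (le_refl (Pf : EReal)) hQN') ?_
  rw [← EReal.coe_toReal (x := ((Pf : ℝ≥0∞) : EReal)) (by simpa using hPf) (by simp),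
      ← EReal.coe_toReal (x := ((Qf : ℝ≥0∞) : EReal)) (by simpa using hQf)
        (by simp), ← EReal.coe_sub]
  simp only [EReal.toReal_coe_ennreal]
  have j1 := congrArg ENNReal.toReal i1
  have j2 := congrArg ENNReal.toReal i2
  have j3 := (ENNReal.toReal_le_toReal hUft (ENNReal.add_ne_top.2 ⟨hUgt, ENNReal.ofReal_ne_top⟩)).2 hle
  rw [ENNReal.toReal_add hUft hQf, ENNReal.toReal_add hPf hM] at j1
  rw [ENNReal.toReal_add hUgt (hQ g k), ENNReal.toReal_add hP hM] at j2
  rw [ENNReal.toReal_add hUgt ENNReal.ofReal_ne_top, ENNReal.toReal_ofReal (by linarith)] at j3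
  exact_mod_cast (by linarith : Pf.toReal - Qf.toReal ≤ b)

lemma pointwise_dense {d : ℕ} (h : Euc d → EReal)
    (hc : Convex ℝ {p : Euc d × ℝ | h p.1 ≤ (p.2 : EReal)})
    (D : Set (Euc d)) (hD1 : D ⊆ closure {x | h x < ⊤})
    (hD2 : {x | h x < ⊤} ⊆ closure D) (x1 : Euc d) (β : ℝ) (hx1 : h x1 < β) :
    ∃ y ∈ D, h y < β := by
  have comb : ∀ (x y : Euc d) (a b s : ℝ), 0 ≤ s → s ≤ 1 → h x ≤ a → h y ≤ b →
      h ((1 - s) • x + s • y) ≤ (((1 - s) * a + s * b : ℝ) : EReal) := by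
    intro x y a b s h0 h1 hx hy
    exact hc (x := (x, a)) hx (y := (y, b)) hy (by linarith : 0 ≤ 1 - s) h0 (by ring)
  obtain ⟨t, hts, hspan, hind⟩ := exists_affineIndependent ℝ (Euc d) {x | h x < ⊤}
  have hfin : t.Finite := finite_set_of_fin_dim_affineIndependent ℝ hind
  -- real bound
  have hreal : ∀ x, h x < ⊤ → ∃ a : ℝ, h x ≤ a := by
    intro x hx
    obtain ⟨a, ha, _⟩ := EReal.lt_iff_exists_real_btwn.1 hx
    exact ⟨a, ha.le⟩
  have hbd : ∃ a : ℝ, ∀ x ∈ t, h x ≤ a := by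
    clear hspan hind
    induction t, hfin using Set.Finite.induction_on with
    | empty => exact ⟨0, by simp⟩
    | @insert x s _ _ ih =>
      obtain ⟨a, ha⟩ := ih (fun z hz => hts (Set.mem_insert_of_mem _ hz))
      obtain ⟨b, hb⟩ := hreal x (hts (Set.mem_insert _ _))
      refine ⟨max a b, ?_⟩
      intro z hz
      rcases hz with rfl | hz
      · exact hb.trans (by exact_mod_cast le_max_right a b)
      · exact (ha z hz).trans (by exact_mod_cast le_max_left a b)
  obtain ⟨a, ha⟩ := hbd
  set C : Set (Euc d) := {x | h x ≤ a} with hC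
  have hCconv : Convex ℝ C := by
    rw [convex_iff_forall_pos]
    intro x hx y hy s r hs hr hsr
    have := comb x y a a r hr.le (by linarith) hx hy
    have e : (1 - r) = s := by linarith
    rw [e] at this
    have e2 : s * a + r * a = a := by rw [← add_mul, hsr, one_mul]
    rw [e2] at this
    exact this
  have hCdom : C ⊆ {x | h x < ⊤} := fun x hx => lt_of_le_of_lt hx (EReal.coe_lt_top a)
  have hCspan : affineSpan ℝ C = affineSpan ℝ {x | h x < ⊤} := by
    apply le_antisymm (affineSpan_mono ℝ hCdom)
    rw [← hspan]
    exact affineSpan_mono ℝ ha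
  have hx1d : h x1 < ⊤ := hx1.trans (EReal.coe_lt_top _)
  have hCne : C.Nonempty := by
    rw [← affineSpan_nonempty ℝ, hCspan, affineSpan_nonempty]
    exact ⟨x1, hx1d⟩
  obtain ⟨c, hcI⟩ := (intrinsicInterior_nonempty hCconv).2 hCne
  obtain ⟨c', hc'1, hc'2⟩ := mem_intrinsicInterior.1 hcI
  obtain ⟨δ, hδ, hball⟩ := Metric.mem_nhds_iff.1 (mem_interior_iff_mem_nhds.1 hc'1)
  obtain ⟨a1, ha1, ha1β⟩ := EReal.lt_iff_exists_real_btwn.1 hx1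
  have ha1β : a1 < β := by exact_mod_cast ha1β
  obtain ⟨s, hs0, hs1, hsβ⟩ : ∃ s : ℝ, 0 < s ∧ s ≤ 1 ∧ (1 - s) * a1 + s * a < β := by
    have hA : 0 < |a - a1| + 1 := by positivity
    refine ⟨min 1 ((β - a1) / 2 / (|a - a1| + 1)), ?_, min_le_left _ _, ?_⟩
    · apply lt_min one_pos
      apply div_pos _ hA
      linarith
    · set s := min 1 ((β - a1) / 2 / (|a - a1| + 1)) with hs
      have h1 : s * (|a - a1| + 1) ≤ (β - a1) / 2 := by
        rw [← le_div_iff₀ hA]; exact min_le_right _ _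
      have h0 : 0 ≤ s := le_min zero_le_one (div_nonneg (by linarith) hA.le)
      have h2 : s * (a - a1) ≤ s * |a - a1| := mul_le_mul_of_nonneg_left (le_abs_self _) h0
      nlinarith
  -- the point
  set p := (1 - s) • x1 + s • c with hp
  have hcC : c ∈ C := intrinsicInterior_subset hcI
  have hpd : h p < ⊤ := lt_of_le_of_lt (comb x1 c a1 a s hs0.le hs1 ha1.le hcC) (EReal.coe_lt_top _)
  obtain ⟨y, hyD, hy⟩ := Metric.mem_closure_iff.1 (hD2 hpd) (s * δ) (by positivity)
  refine ⟨y, hyD, ?_⟩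
  have hyspan : y ∈ affineSpan ℝ C := by
    rw [hCspan]
    have hcl : IsClosed (affineSpan ℝ {x | h x < ⊤} : Set (Euc d)) :=
      AffineSubspace.closed_of_finiteDimensional _
    exact closure_minimal (subset_affineSpan ℝ _) hcl (hD1 hyD)
  have hpspan : p ∈ affineSpan ℝ C := by
    rw [hCspan]; exact subset_affineSpan ℝ _ hpd
  have hcspan : c ∈ affineSpan ℝ C := subset_affineSpan ℝ _ hcC
  set z := s⁻¹ • (y - p) + c with hz
  have hzspan : z ∈ affineSpan ℝ C := by
    have := AffineSubspace.smul_vsub_vadd_mem (affineSpan ℝ C) s⁻¹ hyspan hpspan hcspan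
    simpa using this
  have hzC : z ∈ C := by
    have : (⟨z, hzspan⟩ : affineSpan ℝ C) ∈ Metric.ball c' δ := by
      rw [Metric.mem_ball, Subtype.dist_eq, hc'2]
      change dist z c < δ
      rw [hz, dist_eq_norm]
      simp only [add_sub_cancel_right, norm_smul, norm_inv, Real.norm_eq_abs, abs_of_pos hs0]
      rw [inv_mul_lt_iff₀ hs0, ← dist_eq_norm, dist_comm]
      exact hy
    exact hball this
  have hyz : y = (1 - s) • x1 + s • z := by
    rw [hz, smul_add, smul_smul, mul_inv_cancel₀ hs0.ne', one_smul, hp]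
    abel
  rw [hyz]
  exact lt_of_le_of_lt (comb x1 z a1 a s hs0.le hs1 ha1.le hzC) (by exact_mod_cast hsβ)

lemma caglad_paste {d : ℕ} {T : ℝ} {y z : ℝ → Euc d} (hy : IsCagladOn T y) (hz : IsCagladOn T z)
    (a b : ℝ) : IsCagladOn T ((Ioc a b).piecewise y z) := by
  constructor
  · intro t ht
    by_cases h1 : t ∈ Ioc a b
    · rw [Set.piecewise_eq_of_mem _ _ _ h1]
      refine (hy.1 t ht).congr' ?_
      filter_upwards [Ioo_mem_nhdsLT h1.1] with s hs
      rw [Set.piecewise_eq_of_mem]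
      exact ⟨hs.1, hs.2.le.trans h1.2⟩
    · rw [Set.piecewise_eq_of_notMem _ _ _ h1]
      refine (hz.1 t ht).congr' ?_
      rcases le_or_gt t a with h2 | h2
      · filter_upwards [self_mem_nhdsWithin] with s hs
        rw [Set.piecewise_eq_of_notMem]
        intro h3
        exact absurd (h3.1.trans hs) (not_lt.2 h2)
      · have h4 : b < t := by
          by_contra! h5
          exact h1 ⟨h2, h5⟩
        filter_upwards [Ioo_mem_nhdsLT h4] with s hs
        rw [Set.piecewise_eq_of_notMem]
        intro h3
        exact absurd h3.2 (not_le.2 hs.1)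
  · intro t ht
    by_cases h1 : t ∈ Ico a b
    · obtain ⟨l, hl⟩ := hy.2 t ht
      refine ⟨l, hl.congr' ?_⟩
      filter_upwards [Ioo_mem_nhdsGT h1.2] with s hs
      rw [Set.piecewise_eq_of_mem]
      exact ⟨h1.1.trans_lt hs.1, hs.2.le⟩
    · obtain ⟨l, hl⟩ := hz.2 t ht
      refine ⟨l, hl.congr' ?_⟩
      rcases lt_or_ge t a with h2 | h2
      · filter_upwards [Ioo_mem_nhdsGT h2] with s hs
        rw [Set.piecewise_eq_of_notMem]
        intro h3
        exact absurd h3.1 (not_lt.2 hs.2.le)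
      · have h4 : b ≤ t := by
          by_contra! h5
          exact h1 ⟨h2, h5⟩
        filter_upwards [self_mem_nhdsWithin] with s hs
        rw [Set.piecewise_eq_of_notMem]
        intro h3
        exact absurd (lt_of_lt_of_le hs h3.2) (not_lt.2 h4)

lemma DS_paste {d : ℕ} {T : ℝ} {S : ℝ → Set (Euc d)} (F : Finset (ℝ × ℝ)) :
    ∀ y z : ℝ → Euc d, (IsCagladOn T y ∧ ∀ t ∈ Icc (0:ℝ) T, y t ∈ S t) →
    (IsCagladOn T z ∧ ∀ t ∈ Icc (0:ℝ) T, z t ∈ S t) →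
    (IsCagladOn T ((⋃ q ∈ F, Ioc q.1 q.2).piecewise y z) ∧
      ∀ t ∈ Icc (0:ℝ) T, (⋃ q ∈ F, Ioc q.1 q.2).piecewise y z t ∈ S t) := by
  intro y z hy hz
  constructor
  · induction F using Finset.induction_on with
    | empty =>
      have : (⋃ p ∈ (∅ : Finset (ℝ × ℝ)), Ioc p.1 p.2).piecewise y z = z := by
        ext1 t
        exact Set.piecewise_eq_of_notMem _ _ _ (by simp)
      rw [this]; exact hz.1
    | insert q F _ ih =>
      have : (⋃ p ∈ insert q F, Ioc p.1 p.2).piecewise y z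
          = (Ioc q.1 q.2).piecewise y ((⋃ p ∈ F, Ioc p.1 p.2).piecewise y z) := by
        ext1 t
        rw [Finset.set_biUnion_insert]
        simp only [Set.piecewise, Set.mem_union]
        by_cases h1 : t ∈ Ioc q.1 q.2
        · simp only [h1, true_or, if_true]
        · simp only [h1, false_or, if_false]
      rw [this]
      exact caglad_paste hy.1 ih _ _
  · intro t ht
    by_cases h2 : t ∈ ⋃ p ∈ F, Ioc p.1 p.2
    · rw [Set.piecewise_eq_of_mem _ _ _ h2]; exact hy.2 t ht
    · rw [Set.piecewise_eq_of_notMem _ _ _ h2]; exact hz.2 t ht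

lemma approx_set (μ : Measure ℝ) [IsFiniteMeasure μ] {A : Set ℝ} (hA : MeasurableSet A)
    {δ : ℝ≥0∞} (hδ : 0 < δ) :
    ∃ F : Finset (ℝ × ℝ), μ (symmDiff A (⋃ q ∈ F, Ioc q.1 q.2)) < δ := by
  have hδ2 : δ / 2 ≠ 0 := by simpa using hδ.ne'
  obtain ⟨K, hKA, hK, hKm⟩ := hA.exists_isCompact_sdiff_lt (measure_ne_top μ A) hδ2
  obtain ⟨U, hAU, hU, _, hUm⟩ := hA.exists_isOpen_sdiff_lt (measure_ne_top μ A) hδ2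
  have hex : ∀ t : K, ∃ q : ℝ × ℝ, t.1 ∈ Ioo q.1 q.2 ∧ Ioc q.1 q.2 ⊆ U := by
    intro t
    obtain ⟨ε, hε, hb⟩ := Metric.isOpen_iff.1 hU t.1 (hAU (hKA t.2))
    refine ⟨(t - ε/2, t + ε/2), ⟨by simp; linarith, by simp; linarith⟩, ?_⟩
    intro s hs
    apply hb
    simp only [Metric.mem_ball, Real.dist_eq, abs_lt]
    simp only [mem_Ioc] at hs
    constructor <;> linarith [hs.1, hs.2]
  choose q hq1 hq2 using hex
  obtain ⟨G, hG⟩ := hK.elim_finite_subcover (fun t : K => Ioo (q t).1 (q t).2)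
    (fun _ => isOpen_Ioo) (fun t ht => mem_iUnion.2 ⟨⟨t, ht⟩, hq1 ⟨t, ht⟩⟩)
  refine ⟨G.image q, ?_⟩
  set V := ⋃ p ∈ G.image q, Ioc p.1 p.2 with hV
  have hKV : K ⊆ V := by
    intro t ht
    obtain ⟨i, hi, hti⟩ := mem_iUnion₂.1 (hG ht)
    exact mem_iUnion₂.2 ⟨q i, Finset.mem_image_of_mem q hi, Ioo_subset_Ioc_self hti⟩
  have hVU : V ⊆ U := by
    intro t ht
    obtain ⟨p, hp, htp⟩ := mem_iUnion₂.1 ht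
    obtain ⟨i, hi, rfl⟩ := Finset.mem_image.1 hp
    exact hq2 i htp
  have hsub : symmDiff A V ⊆ (A \ K) ∪ (U \ A) := by
    rintro t (⟨h1, h2⟩ | ⟨h1, h2⟩)
    · exact Or.inl ⟨h1, fun h => h2 (hKV h)⟩
    · exact Or.inr ⟨hVU h1, h2⟩
  calc μ (symmDiff A V) ≤ μ (A \ K) + μ (U \ A) := (measure_mono hsub).trans (measure_union_le _ _)
    _ < δ / 2 + δ / 2 := ENNReal.add_lt_add hKm hUm
    _ = δ := ENNReal.add_halves δ

lemma caglad_measurable {d : ℕ} {T : ℝ} {y : ℝ → Euc d} (hy : IsCagladOn T y) :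
    ∃ y' : ℝ → Euc d, Measurable y' ∧ ∀ t ∈ Icc (0:ℝ) T, y' t = y t := by
  have hm : Measurable ((Ioc (0:ℝ) T).indicator y) := by
    refine measurable_of_tendsto_metrizable (f := fun (n : ℕ) =>
      (Ioc (0:ℝ) T).indicator (fun t => y ((⌈(n+1) * t⌉ - 1) / (n+1)))) ?_ ?_
    · intro n
      refine Measurable.indicator ?_ measurableSet_Ioc
      have h1 : Measurable (fun t : ℝ => ⌈((n:ℝ)+1) * t⌉) :=
        Int.measurable_ceil.comp (measurable_const.mul measurable_id)
      exact (measurable_from_top (f := fun m : ℤ => y (((m:ℝ) - 1) / (n+1)))).comp h1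
    · rw [tendsto_pi_nhds]
      intro t
      by_cases ht : t ∈ Ioc (0:ℝ) T
      · simp only [Set.indicator_of_mem ht]
        refine (hy.1 t ht).comp ?_
        rw [tendsto_nhdsWithin_iff]
        constructor
        · have hlim : Tendsto (fun n : ℕ => t - 1 / ((n:ℝ) + 1)) atTop (𝓝 t) := by
            simpa using (tendsto_const_nhds (x := t)).sub tendsto_one_div_add_atTop_nhds_zero_nat
          refine tendsto_of_tendsto_of_tendsto_of_le_of_le hlim tendsto_const_nhds ?_ ?_
          · intro n
            have hn : (0:ℝ) < n + 1 := by positivity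
            have := Int.le_ceil (((n:ℝ)+1) * t)
            simp only
            rw [le_div_iff₀ hn, sub_mul, div_mul_cancel₀ _ hn.ne']
            linarith
          · intro n
            have hn : (0:ℝ) < n + 1 := by positivity
            have := Int.ceil_lt_add_one (((n:ℝ)+1) * t)
            simp only
            rw [div_le_iff₀ hn]
            linarith
        · refine Eventually.of_forall fun n => ?_
          have hn : (0:ℝ) < n + 1 := by positivity
          have := Int.ceil_lt_add_one (((n:ℝ)+1) * t)
          simp only [mem_Iio]
          rw [div_lt_iff₀ hn]
          linarith
      · simp only [Set.indicator_of_notMem ht]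
        exact tendsto_const_nhds
  refine ⟨fun t => if t = 0 then y 0 else (Ioc (0:ℝ) T).indicator y t,
    Measurable.ite (measurableSet_singleton 0) measurable_const hm, ?_⟩
  intro t ht
  by_cases h0 : t = 0
  · simp [h0]
  · simp only [h0, if_false]
    rw [Set.indicator_of_mem]
    exact ⟨lt_of_le_of_ne ht.1 (Ne.symm h0), ht.2⟩

lemma integrand_measurable {d : ℕ} {T : ℝ} {μ : Measure ℝ} (hμc : μ (Set.Icc (0:ℝ) T)ᶜ = 0)
    {h : ℝ → Euc d → EReal} (hh : IsConvexNormalIntegrand T h)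
    {y : ℝ → Euc d} (hy : IsCagladOn T y) : AEMeasurable (fun t => h t (y t)) μ := by
  obtain ⟨y', hy'm, hy'⟩ := caglad_measurable hy
  set E : ℝ → Set (Euc d × ℝ) := fun t => {p | t ∈ Icc (0:ℝ) T ∧ h t p.1 ≤ (p.2 : EReal)} with hE
  have hEc : ∀ t, IsClosed (E t) := by
    intro t
    by_cases ht : t ∈ Icc (0:ℝ) T
    · simpa only [hE, ht, true_and] using (hh.1 t ht).1
    · simp only [hE, ht, false_and, Set.ofPred_false, isClosed_empty]
  have hD : Measurable (Function.uncurry fun (p : Euc d × ℝ) (t : ℝ) => Metric.infEDist p (E t)) := by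
    refine measurable_uncurry_of_continuous_of_measurable (fun t => Metric.continuous_infEDist) ?_
    intro p
    refine measurable_of_Iio fun r => ?_
    convert hh.2 (Metric.eball p r) Metric.isOpen_eball using 1
    ext t
    simp only [mem_preimage, mem_Iio, Metric.infEDist_lt_iff, mem_ofPred_eq, hE, Metric.mem_eball]
    constructor
    · rintro ⟨q, ⟨h1, h2⟩, h3⟩
      exact ⟨h1, q, by rwa [edist_comm], h2⟩
    · rintro ⟨h1, q, h3, h2⟩
      exact ⟨q, ⟨h1, h2⟩, by rwa [edist_comm]⟩
  set f : ℝ → EReal := fun t => if t ∈ Icc (0:ℝ) T then h t (y' t) else ⊤ with hf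
  have hle : ∀ r : ℝ, MeasurableSet {t | f t ≤ r} := by
    intro r
    have hp : Measurable fun t : ℝ => ((y' t, r), t) :=
      (hy'm.prodMk measurable_const).prodMk measurable_id
    have hm := hD.comp hp
    simp only [Function.comp_def, Function.uncurry_apply_pair] at hm
    convert hm (measurableSet_singleton 0) using 1
    ext t
    simp only [mem_ofPred_eq, mem_preimage, mem_singleton_iff]
    rw [← Metric.mem_closure_iff_infEDist_zero, (hEc t).closure_eq]
    by_cases ht : t ∈ Icc (0:ℝ) T
    · simp only [hf, hE, ht, if_true, true_and, mem_ofPred_eq]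
    · simp only [hf, hE, ht, if_false, false_and, mem_ofPred_eq, iff_false, not_le]
      exact EReal.coe_lt_top r
  have hfm : Measurable f := by
    refine measurable_of_Iic fun r => ?_
    induction r with
    | top => simp
    | coe r => exact hle r
    | bot =>
      have : f ⁻¹' Iic ⊥ = ⋂ n : ℕ, {t | f t ≤ ((-(n:ℝ) : ℝ) : EReal)} := by
        ext t
        simp only [mem_preimage, mem_Iic, le_bot_iff, mem_iInter, mem_ofPred_eq]
        constructor
        · intro h n; rw [h]; exact bot_le
        · intro h
          rw [EReal.eq_bot_iff_forall_lt]
          intro x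
          obtain ⟨n, hn⟩ := exists_nat_gt (-x)
          refine (h n).trans_lt ?_
          exact_mod_cast (by linarith : -(n:ℝ) < x)
      rw [this]
      exact MeasurableSet.iInter fun n => hle _
  refine ⟨f, hfm, ?_⟩
  have : ∀ᵐ t ∂μ, t ∈ Icc (0:ℝ) T := by rw [ae_iff]; exact hμc
  filter_upwards [this] with t ht
  simp only [hf, ht, if_true, hy' t ht]

lemma countable_open {d : ℕ} {T : ℝ} (DS : Set (ℝ → Euc d)) (hDS : ∀ y ∈ DS, IsCagladOn T y)
    (O : Set (Euc d)) (hO : IsOpen O) :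
    ∃ C ⊆ DS, C.Countable ∧ ∀ t ∈ Icc (0:ℝ) T, (∃ y ∈ DS, y t ∈ O) → ∃ y ∈ C, y t ∈ O := by
  set A : Set ℝ := {t | t ∈ Ioc (0:ℝ) T ∧ ∃ y ∈ DS, y t ∈ O} with hA
  have hex : ∀ t : A, ∃ y ∈ DS, y t ∈ O ∧ ∃ a < t.1, ∀ s ∈ Ioo a t.1, y s ∈ O := by
    rintro ⟨t, ht, y, hy, hyO⟩
    refine ⟨y, hy, hyO, ?_⟩
    have := ((hDS y hy).1 t ht).eventually (hO.mem_nhds hyO)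
    obtain ⟨a, ha, h2⟩ := mem_nhdsLT_iff_exists_Ioo_subset.1 this
    exact ⟨a, ha, fun s hs => h2 hs⟩
  choose Y hYD hYO a ha hYa using hex
  obtain ⟨I, hIc, hI⟩ := TopologicalSpace.isOpen_iUnion_countable
    (fun t : A => Ioo (a t) t.1) (fun _ => isOpen_Ioo)
  set B : Set ℝ := A \ ⋃ t : A, Ioo (a t) t.1 with hB
  have hBc : B.Countable := by
    refine (countable_setOfPred_isolated_left_within (s := B)).mono ?_
    intro t ht
    refine ⟨ht, ?_⟩
    have htA : t ∈ A := ht.1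
    rw [← Filter.empty_mem_iff_bot, mem_nhdsWithin]
    refine ⟨Ioi (a ⟨t, htA⟩), isOpen_Ioi, ha ⟨t, htA⟩, ?_⟩
    rintro s ⟨hs1, hs2, hs3⟩
    exact hs2.2 (mem_iUnion.2 ⟨⟨t, htA⟩, hs1, hs3⟩)
  set C0 : Set (ℝ → Euc d) := Y '' I ∪ Y '' ((↑) ⁻¹' B) with hC0
  have hC0c : C0.Countable :=
    (hIc.image _).union ((hBc.preimage Subtype.val_injective).image _)
  have hC0D : C0 ⊆ DS := by
    rintro _ (⟨t, _, rfl⟩ | ⟨t, _, rfl⟩) <;> exact hYD t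
  have hmain : ∀ t ∈ A, ∃ y ∈ C0, y t ∈ O := by
    intro t ht
    by_cases h1 : t ∈ ⋃ t : A, Ioo (a t) t.1
    · rw [← hI] at h1
      obtain ⟨i, hi, hti⟩ := mem_iUnion₂.1 h1
      exact ⟨Y i, Or.inl ⟨i, hi, rfl⟩, hYa i t hti⟩
    · exact ⟨Y ⟨t, ht⟩, Or.inr ⟨⟨t, ht⟩, ⟨ht, h1⟩, rfl⟩, hYO ⟨t, ht⟩⟩
  by_cases h0 : ∃ y ∈ DS, y 0 ∈ O
  · obtain ⟨y0, hy0, hy0O⟩ := h0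
    refine ⟨insert y0 C0, insert_subset hy0 hC0D, hC0c.insert _, ?_⟩
    intro t ht hex
    rcases ht.1.eq_or_lt with rfl | hpos
    · exact ⟨y0, mem_insert _ _, hy0O⟩
    · obtain ⟨y, hy, hyO⟩ := hmain t ⟨⟨hpos, ht.2⟩, hex⟩
      exact ⟨y, mem_insert_of_mem _ hy, hyO⟩
  · refine ⟨C0, hC0D, hC0c, ?_⟩
    intro t ht hex
    rcases ht.1.eq_or_lt with rfl | hpos
    · exact absurd hex h0
    · exact hmain t ⟨⟨hpos, ht.2⟩, hex⟩

lemma countable_family {d : ℕ} {T : ℝ} (DS DI : Set (ℝ → Euc d)) (hDS : ∀ y ∈ DS, IsCagladOn T y)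
    (hne : DI.Nonempty)
    (happ : ∀ y ∈ DS, ∀ ε > (0:ℝ), ∃ z ∈ DI, ∀ t ∈ Icc (0:ℝ) T, dist (z t) (y t) ≤ ε) :
    ∃ z : ℕ → ℝ → Euc d, (∀ n, z n ∈ DI) ∧ ∀ t ∈ Icc (0:ℝ) T, ∀ y ∈ DS,
      y t ∈ closure (range fun n => z n t) := by
  choose! C hCD hCc hC using fun (O : Set (Euc d)) (hO : IsOpen O) => countable_open DS hDS O hO
  set 𝓑 := TopologicalSpace.countableBasis (Euc d)
  have hB := TopologicalSpace.isBasis_countableBasis (Euc d)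
  have hBc := TopologicalSpace.countable_countableBasis (Euc d)
  choose! Z hZ1 hZ2 using happ
  set R : Set (ℝ → Euc d) := ⋃ O ∈ 𝓑, ⋃ n : ℕ, (fun y => Z y (1 / ((n:ℝ) + 1))) '' C O with hR
  have hRc : R.Countable := hBc.biUnion fun O hO => countable_iUnion fun n =>
    (hCc O (hB.isOpen hO)).image _
  have hpos : ∀ n : ℕ, 1 / ((n:ℝ) + 1) > 0 := fun n => by positivity
  have hRI : R ⊆ DI := by
    intro z hz
    simp only [hR, mem_iUnion] at hz
    obtain ⟨O, hO, n, y, hy, rfl⟩ := hz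
    exact hZ1 y (hCD O (hB.isOpen hO) hy) _ (hpos n)
  obtain ⟨z0, hz0⟩ := hne
  obtain ⟨z, hz⟩ := (hRc.insert z0).exists_eq_range (insert_nonempty _ _)
  refine ⟨z, ?_, ?_⟩
  · intro n
    have : z n ∈ insert z0 R := by rw [hz]; exact mem_range_self n
    rcases this with h | h
    · rw [h]; exact hz0
    · exact hRI h
  · intro t ht y hy
    rw [Metric.mem_closure_iff]
    intro ε hε
    obtain ⟨O, hO, hyO, hOb⟩ := hB.exists_subset_of_mem_open
      (Metric.mem_ball_self (x := y t) (half_pos hε)) Metric.isOpen_ball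
    obtain ⟨y', hy', hy'O⟩ := hC O (hB.isOpen hO) t ht ⟨y, hy, hyO⟩
    obtain ⟨n, hn⟩ := exists_nat_one_div_lt (half_pos hε)
    have hmem : Z y' (1 / ((n:ℝ) + 1)) ∈ range z := by
      rw [← hz]
      refine mem_insert_of_mem _ ?_
      simp only [hR, mem_iUnion]
      exact ⟨O, hO, n, y', hy', rfl⟩
    obtain ⟨m, hm⟩ := hmem
    refine ⟨z m t, mem_range_self m, ?_⟩
    have h1 := hZ2 y' (hCD O (hB.isOpen hO) hy') _ (hpos n) t ht
    rw [← hm] at h1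
    have h2 := hOb hy'O
    rw [Metric.mem_ball] at h2
    calc dist (y t) (z m t) ≤ dist (y t) (y' t) + dist (y' t) (z m t) := dist_triangle _ _ _
      _ < ε := by rw [dist_comm (y t), dist_comm (y' t) (z m t)]; linarith

lemma paste_step {d : ℕ} {T : ℝ} {μ : Measure ℝ} [IsFiniteMeasure μ] {S : ℝ → Set (Euc d)}
    (U : (ℝ → Euc d) → ℝ → ℝ≥0∞)
    (hUm : ∀ y, IsCagladOn T y → AEMeasurable (U y) μ)
    (hUloc : ∀ y z t, y t = z t → U y t = U z t)
    {w z : ℝ → Euc d}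
    (hw : IsCagladOn T w ∧ ∀ t ∈ Icc (0:ℝ) T, w t ∈ S t)
    (hz : IsCagladOn T z ∧ ∀ t ∈ Icc (0:ℝ) T, z t ∈ S t)
    (hwf : ∫⁻ t, U w t ∂μ ≠ ⊤) (hzf : ∫⁻ t, U z t ∂μ ≠ ⊤) {ε : ℝ≥0∞} (hε : ε ≠ 0) :
    ∃ v : ℝ → Euc d, (IsCagladOn T v ∧ ∀ t ∈ Icc (0:ℝ) T, v t ∈ S t) ∧
      ∫⁻ t, U v t ∂μ ≠ ⊤ ∧ ∃ e : ℝ → ℝ≥0∞, AEMeasurable e μ ∧ ∫⁻ t, e t ∂μ ≤ ε ∧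
      ∀ᵐ t ∂μ, U v t ≤ min (U w t) (U z t) + e t := by
  have mw := hUm w hw.1
  have mz := hUm z hz.1
  have hsum : ∫⁻ t, (U w t + U z t) ∂μ ≠ ⊤ := by
    rw [lintegral_add_left' mw]
    exact ENNReal.add_ne_top.2 ⟨hwf, hzf⟩
  obtain ⟨δ, hδ, hδ2⟩ := exists_pos_setLIntegral_lt_of_measure_lt hsum hε
  set A : Set ℝ := {t | mw.mk _ t ≤ mz.mk _ t} with hA
  have hAm : MeasurableSet A := measurableSet_le mw.measurable_mk mz.measurable_mk
  obtain ⟨F, hF⟩ := approx_set μ hAm hδ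
  set V := ⋃ q ∈ F, Ioc q.1 q.2 with hV
  have hVm : MeasurableSet V := Finset.measurableSet_biUnion _ fun _ _ => measurableSet_Ioc
  have hin : ∀ t ∈ V, U (V.piecewise w z) t = U w t := fun t ht =>
    hUloc _ _ _ (Set.piecewise_eq_of_mem _ _ _ ht)
  have hout : ∀ t ∉ V, U (V.piecewise w z) t = U z t := fun t ht =>
    hUloc _ _ _ (Set.piecewise_eq_of_notMem _ _ _ ht)
  refine ⟨V.piecewise w z, DS_paste F w z hw hz, ?_,
    (symmDiff A V).indicator (fun t => U w t + U z t), ?_, ?_, ?_⟩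
  · refine ne_top_of_le_ne_top hsum (lintegral_mono fun t => ?_)
    by_cases ht : t ∈ V
    · rw [hin t ht]; exact le_self_add
    · rw [hout t ht]; exact le_add_self
  · exact (mw.add mz).indicator (hAm.symmDiff hVm)
  · rw [lintegral_indicator (hAm.symmDiff hVm)]
    exact (hδ2 _ hF).le
  · filter_upwards [mw.ae_eq_mk, mz.ae_eq_mk] with t h1 h2
    by_cases ht : t ∈ V
    · rw [hin t ht]
      by_cases hta : t ∈ A
      · have : U w t ≤ U z t := by rw [h1, h2]; exact hta
        rw [min_eq_left this]; exact le_self_add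
      · rw [Set.indicator_of_mem (show t ∈ symmDiff A V from Or.inr ⟨ht, hta⟩)]
        exact le_self_add.trans le_add_self
    · rw [hout t ht]
      by_cases hta : t ∈ A
      · rw [Set.indicator_of_mem (show t ∈ symmDiff A V from Or.inl ⟨hta, ht⟩)]
        exact le_add_self.trans le_add_self
      · have : U z t ≤ U w t := by
          rw [h1, h2]; exact (not_le.1 hta).le
        rw [min_eq_right this]; exact le_self_add

noncomputable def runMin (u : ℕ → ℝ → ℝ≥0∞) : ℕ → ℝ → ℝ≥0∞
  | 0 => u 0
  | n + 1 => fun t => min (runMin u n t) (u (n + 1) t)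

lemma runMin_le (u : ℕ → ℝ → ℝ≥0∞) (n : ℕ) (t : ℝ) : runMin u n t ≤ u n t := by
  cases n with
  | zero => exact le_rfl
  | succ n => exact min_le_right _ _

lemma paste_all {d : ℕ} {T : ℝ} {μ : Measure ℝ} [IsFiniteMeasure μ] {S : ℝ → Set (Euc d)}
    (U : (ℝ → Euc d) → ℝ → ℝ≥0∞)
    (hUm : ∀ y, IsCagladOn T y → AEMeasurable (U y) μ)
    (hUloc : ∀ y z t, y t = z t → U y t = U z t)
    {z : ℕ → ℝ → Euc d}
    (hz : ∀ n, IsCagladOn T (z n) ∧ ∀ t ∈ Icc (0:ℝ) T, z n t ∈ S t)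
    (hzf : ∀ n, ∫⁻ t, U (z n) t ∂μ ≠ ⊤) (N : ℕ) : ∀ {ε : ℝ≥0∞}, ε ≠ 0 →
    ∃ v : ℝ → Euc d, (IsCagladOn T v ∧ ∀ t ∈ Icc (0:ℝ) T, v t ∈ S t) ∧
      ∫⁻ t, U v t ∂μ ≠ ⊤ ∧ ∃ e : ℝ → ℝ≥0∞, AEMeasurable e μ ∧ ∫⁻ t, e t ∂μ ≤ ε ∧
      ∀ᵐ t ∂μ, U v t ≤ runMin (fun n => U (z n)) N t + e t := by
  induction N with
  | zero =>
    intro ε hε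
    exact ⟨z 0, hz 0, hzf 0, fun _ => 0, aemeasurable_const, by simp,
      ae_of_all _ fun t => by simp [runMin]⟩
  | succ N ih =>
    intro ε hε
    have hε2 : ε / 2 ≠ 0 := by simpa using hε
    obtain ⟨w, hw, hwf, e, hem, he, hle⟩ := ih hε2
    obtain ⟨v, hv, hvf, e', hem', he', hle'⟩ :=
      paste_step U hUm hUloc hw (hz (N + 1)) hwf (hzf (N + 1)) hε2
    refine ⟨v, hv, hvf, fun t => e t + e' t, hem.add hem', ?_, ?_⟩
    · rw [lintegral_add_left' hem]
      exact (add_le_add he he').trans (ENNReal.add_halves ε).le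
    · filter_upwards [hle, hle'] with t h1 h2
      refine h2.trans ?_
      rw [← add_assoc]
      refine add_le_add_left ?_ _
      change _ ≤ min _ _ + e t
      rw [min_add_add_right _ _ _ |>.symm]
      exact min_le_min h1 le_self_add

lemma inf_approx {d : ℕ} {T : ℝ} {μ : Measure ℝ} [IsFiniteMeasure μ] {S : ℝ → Set (Euc d)}
    (U : (ℝ → Euc d) → ℝ → ℝ≥0∞)
    (hUm : ∀ y, IsCagladOn T y → AEMeasurable (U y) μ)
    (hUloc : ∀ y z t, y t = z t → U y t = U z t)
    {z : ℕ → ℝ → Euc d}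
    (hz : ∀ n, IsCagladOn T (z n) ∧ ∀ t ∈ Icc (0:ℝ) T, z n t ∈ S t)
    (hzf : ∀ n, ∫⁻ t, U (z n) t ∂μ ≠ ⊤) {ε : ℝ≥0∞} (hε : ε ≠ 0) :
    ∃ v : ℝ → Euc d, (IsCagladOn T v ∧ ∀ t ∈ Icc (0:ℝ) T, v t ∈ S t) ∧
      ∫⁻ t, U v t ∂μ ≤ ∫⁻ t, ⨅ n, U (z n) t ∂μ + ε := by
  have hε2 : ε / 2 ≠ 0 := by simpa using hε
  set m := runMin (fun n => U (z n)) with hm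
  have hmm : ∀ N, AEMeasurable (m N) μ := by
    intro N
    induction N with
    | zero => exact hUm _ (hz 0).1
    | succ N ih => exact ih.min (hUm _ (hz (N + 1)).1)
  have hanti : ∀ t, Antitone fun N => m N t := fun t =>
    antitone_nat_of_succ_le fun N => min_le_left _ _
  have h1 : ∫⁻ t, ⨅ N, m N t ∂μ = ⨅ N, ∫⁻ t, m N t ∂μ :=
    lintegral_iInf' hmm (ae_of_all _ hanti) (hzf 0)
  have h2 : ∫⁻ t, ⨅ N, m N t ∂μ ≤ ∫⁻ t, ⨅ n, U (z n) t ∂μ :=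
    lintegral_mono fun t => iInf_mono fun n => runMin_le (fun n => U (z n)) n t
  have hfin : ∫⁻ t, ⨅ n, U (z n) t ∂μ ≠ ⊤ :=
    ne_top_of_le_ne_top (hzf 0) (lintegral_mono fun t => iInf_le _ 0)
  have h3 : ⨅ N, ∫⁻ t, m N t ∂μ < ∫⁻ t, ⨅ n, U (z n) t ∂μ + ε / 2 := by
    rw [← h1]; exact h2.trans_lt (ENNReal.lt_add_right hfin hε2)
  obtain ⟨N, hN⟩ := iInf_lt_iff.1 h3
  obtain ⟨v, hv, hvf, e, hem, he, hle⟩ := paste_all U hUm hUloc hz hzf N hε2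
  refine ⟨v, hv, ?_⟩
  calc ∫⁻ t, U v t ∂μ ≤ ∫⁻ t, (m N t + e t) ∂μ := lintegral_mono_ae hle
    _ = ∫⁻ t, m N t ∂μ + ∫⁻ t, e t ∂μ := lintegral_add_left' (hmm N) _
    _ ≤ (∫⁻ t, ⨅ n, U (z n) t ∂μ + ε / 2) + ε / 2 := add_le_add hN.le he
    _ = ∫⁻ t, ⨅ n, U (z n) t ∂μ + ε := by rw [add_assoc, ENNReal.add_halves]

lemma shift_iInf (f : ℕ → EReal) (k : ℕ) :
    ((⨅ n, f n) + (k : ℝ)).toENNReal = ⨅ n, (f n + (k : ℝ)).toENNReal := by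
  have hmono : Monotone fun a : EReal => (a + ((k : ℝ) : EReal)).toENNReal := fun a b hab =>
    EReal.toENNReal_le_toENNReal (by gcongr)
  have hcont : Continuous fun a : EReal => (a + ((k : ℝ) : EReal)).toENNReal := by
    refine EReal.continuous_toENNReal.comp ?_
    rw [continuous_iff_continuousAt]
    intro a
    have := EReal.continuousAt_add (p := (a, ((k:ℝ):EReal))) (Or.inr (EReal.coe_ne_bot _)) (Or.inr (EReal.coe_ne_top _))
    exact ContinuousAt.comp (f := fun a : EReal => (a, ((k:ℝ):EReal))) this (by fun_prop)
  exact Monotone.map_ciInf_of_continuousAt (f := fun a : EReal => (a + ((k : ℝ) : EReal)).toENNReal)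
    hcont.continuousAt hmono (OrderBot.bddBelow _)

/-- **Interchange rule on the space of càglàd functions** (Theorem 3.5): under
Assumption 3.4 (`S̃_t = cl{y_t | y ∈ D_l(S̃)}` and `D_l(S̃) = cl(dom I_h̃ ∩ D_l(S̃))` in
the supremum norm), `inf_{y ∈ D_l(S̃)} I_h̃(y) = ∫ inf_{x∈ℝ^d} h̃_t(x) dμ̃(t)` as soon as
the left side is `< +∞`. -/
theorem statement3 {d : ℕ} (T : ℝ) (hT : 0 < T)
    (μ : Measure ℝ) [IsFiniteMeasure μ] (hμc : μ (Set.Icc (0:ℝ) T)ᶜ = 0)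
    (h : ℝ → Euc d → EReal) (hh : IsConvexNormalIntegrand T h)
    (DS : Set (ℝ → Euc d))
    (hDS : DS = {y | IsCagladOn T y ∧
      ∀ t ∈ Set.Icc (0:ℝ) T, y t ∈ closure {x | h t x < ⊤}})
    -- Assumption 3.2 (i): `S_t = cl{y_t | y ∈ D(S)}` for all `t`
    (hS : ∀ t ∈ Set.Icc (0:ℝ) T,
      closure {x | h t x < ⊤} = closure {v | ∃ y ∈ DS, y t = v})
    -- Assumption 3.2 (ii): `D(S) = cl(dom I_h ∩ D(S))`, closure in the supremum norm
    (hcl : ∀ y : ℝ → Euc d, IsCagladOn T y →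
      (y ∈ DS ↔ ∀ ε > (0:ℝ), ∃ z ∈ DS, eIntegral μ (fun t => h t (z t)) < ⊤ ∧
        ∀ t ∈ Set.Icc (0:ℝ) T, dist (z t) (y t) ≤ ε))
    (hfin : (⨅ y ∈ DS, eIntegral μ fun t => h t (y t)) < ⊤) :
    (⨅ y ∈ DS, eIntegral μ fun t => h t (y t)) = eIntegral μ fun t => ⨅ x : Euc d, h t x := by
  have hDSc : ∀ y ∈ DS, IsCagladOn T y := fun y hy => by rw [hDS] at hy; exact hy.1
  have hDSs : ∀ y ∈ DS, ∀ t ∈ Set.Icc (0:ℝ) T, y t ∈ closure {x | h t x < ⊤} :=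
    fun y hy => by rw [hDS] at hy; exact hy.2
  have hae : ∀ᵐ t ∂μ, t ∈ Icc (0:ℝ) T := by rw [ae_iff]; exact hμc
  apply le_antisymm
  swap
  · exact le_iInf₂ fun y _ => eIntegral_mono (ae_of_all _ fun t => iInf_le _ _)
  obtain ⟨y0, hy0⟩ := iInf_lt_iff.1 hfin
  obtain ⟨hy0D, hy0f⟩ := iInf_lt_iff.1 hy0
  set DI : Set (ℝ → Euc d) := {z | z ∈ DS ∧ eIntegral μ (fun t => h t (z t)) < ⊤} with hDI
  obtain ⟨z, hzI, hzd⟩ := countable_family DS DI hDSc ⟨y0, hy0D, hy0f⟩ (by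
    intro y hy ε hε
    obtain ⟨w, hw1, hw2, hw3⟩ := (hcl y (hDSc y hy)).1 hy ε hε
    exact ⟨w, ⟨hw1, hw2⟩, hw3⟩)
  -- pointwise identity
  have hpt : ∀ t ∈ Icc (0:ℝ) T, ⨅ x : Euc d, h t x = ⨅ n, h t (z n t) := by
    intro t ht
    apply le_antisymm (le_iInf fun n => iInf_le _ _)
    refine le_iInf fun x => ?_
    refine le_of_forall_gt fun c hc => ?_
    obtain ⟨β, hβ1, hβ2⟩ := EReal.lt_iff_exists_real_btwn.1 hc
    obtain ⟨v, ⟨n, rfl⟩, hv⟩ := pointwise_dense (h t) (hh.1 t ht).2 (range fun n => z n t)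
      (by rintro _ ⟨n, rfl⟩; exact hDSs _ (hzI n).1 t ht)
      (by
        refine subset_closure.trans ?_
        rw [hS t ht]
        refine closure_minimal ?_ isClosed_closure
        rintro _ ⟨y, hy, rfl⟩
        exact hzd t ht y hy) x β hβ1
    exact (iInf_le _ n).trans_lt (hv.trans hβ2)
  have hfm : ∀ y, IsCagladOn T y → AEMeasurable (fun t => h t (y t)) μ :=
    fun y hy => integrand_measurable hμc hh hy
  have hgm : AEMeasurable (fun t => ⨅ x : Euc d, h t x) μ := by
    refine (AEMeasurable.iInf fun n => hfm (z n) (hDSc _ (hzI n).1)).congr ?_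
    filter_upwards [hae] with t ht
    rw [hpt t ht]
  have hgt : eIntegral μ (fun t => ⨅ x : Euc d, h t x) < ⊤ :=
    (eIntegral_mono (ae_of_all _ fun t => iInf_le _ (y0 t))).trans_lt hy0f
  refine le_of_forall_gt fun β hβ => ?_
  obtain ⟨k, ε, hε, hstep⟩ := eIntegral_step hgm hgt hβ
  have hkm : Measurable fun a : EReal => (a + ((k : ℝ) : EReal)).toENNReal := by
    have : Monotone fun a : EReal => (a + ((k : ℝ) : EReal)).toENNReal := fun a b hab =>
      EReal.toENNReal_le_toENNReal (by gcongr)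
    exact this.measurable
  obtain ⟨v, hv, hvle⟩ := inf_approx (T := T) (μ := μ) (S := fun t => closure {x | h t x < ⊤})
    (fun y t => (h t (y t) + ((k : ℝ) : EReal)).toENNReal)
    (fun y hy => hkm.comp_aemeasurable (hfm y hy))
    (fun y z t hyz => by simp only [hyz])
    (z := z) (fun n => ⟨hDSc _ (hzI n).1, hDSs _ (hzI n).1⟩)
    (fun n => by
      have h1 := eIntegral_lt_top.1 (hzI n).2
      have h2 : ∫⁻ t, ((h t (z n t)).toENNReal + (k : ℝ≥0∞)) ∂μ ≠ ⊤ := by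
        rw [lintegral_add_right _ measurable_const, lintegral_const]
        exact ENNReal.add_ne_top.2 ⟨h1, ENNReal.mul_ne_top (by simp) (measure_ne_top _ _)⟩
      refine ne_top_of_le_ne_top h2 (lintegral_mono fun t => ?_)
      refine EReal.toENNReal_add_le.trans ?_
      rw [EReal.real_coe_toENNReal, ENNReal.ofReal_natCast]) hε.ne'
  have hvD : v ∈ DS := by rw [hDS]; exact hv
  refine (iInf₂_le v hvD).trans_lt (hstep _ (hfm v hv.1) (hvle.trans ?_))
  gcongr ?_ + _
  refine lintegral_mono_ae ?_
  filter_upwards [hae] with t ht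
  rw [hpt t ht, shift_iInf]
end

section
/- Let (Ω,F) be a measurable space, T > 0 finite, h : Ω × [0,T] × ℝ^d → ℝ ∪ {±∞} a normal integrand whose epigraphical mapping (ω,t) ⇒ epi h_t(·,ω) is closed-valued and F ⊗ B([0,T])-measurable, and let μ be a random nonnegative Radon measure on [0,T] (i.e., ω ↦ μ(ω,B) is F-measurable for every Borel B ⊆ [0,T]). Then the map (ω, y) ↦ I_h(ω, y) := ∫_{[0,T]} h_t(y_t, ω) dμ(ω)(t) is F ⊗ B(D)-measurable on Ω × D. -/
open MeasureTheory Filter Set Topology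
open scoped ENNReal Classical

/-- A function `[0,T] → ℝ^d` (modelled on `ℝ`) is càdlàg: right-continuous on `[0,T)`
with left limits on `(0,T]`. -/
def IsCadlagOn (T : ℝ) {d : ℕ} (y : ℝ → Euc d) : Prop :=
  (∀ t ∈ Set.Ico (0:ℝ) T, Tendsto y (𝓝[>] t) (𝓝 (y t))) ∧
  (∀ t ∈ Set.Ioc (0:ℝ) T, ∃ l, Tendsto y (𝓝[<] t) (𝓝 l))

/-- The space `D` of càdlàg functions `[0,T] → ℝ^d`. -/
def Dspace (T : ℝ) (d : ℕ) := {y : ℝ → Euc d // IsCadlagOn T y}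

/-- The σ-algebra `B(D)` on `D` generated by the evaluation maps `y ↦ y_t`, `t ∈ [0,T]`
(the Borel σ-algebra of the Skorokhod topology). -/
noncomputable def Dsigma (T : ℝ) (d : ℕ) : MeasurableSpace (Dspace T d) :=
  ⨆ t ∈ Set.Icc (0:ℝ) T,
    MeasurableSpace.comap (fun y : Dspace T d => y.1 t) inferInstance

noncomputable instance instMDspace (T : ℝ) (d : ℕ) : MeasurableSpace (Dspace T d) := Dsigma T d

lemma measurable_evalD {T : ℝ} {d : ℕ} {t : ℝ} (ht : t ∈ Set.Icc (0:ℝ) T) :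
    Measurable (fun y : Dspace T d => y.1 t) := by
  rw [measurable_iff_comap_le]
  exact le_iSup₂_of_le (f := fun t (_ : t ∈ Set.Icc (0:ℝ) T) =>
    MeasurableSpace.comap (fun y : Dspace T d => y.1 t) inferInstance) t ht le_rfl

noncomputable def clipT (T t : ℝ) : ℝ := max 0 (min T t)

lemma clipT_mem {T : ℝ} (hT : 0 < T) (t : ℝ) : clipT T t ∈ Set.Icc (0:ℝ) T :=
  ⟨le_max_left _ _, max_le hT.le (min_le_left _ _)⟩

lemma clipT_eq {T t : ℝ} (ht : t ∈ Set.Icc (0:ℝ) T) : clipT T t = t := by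
  simp [clipT, ht.1, ht.2]

lemma clipT_continuous (T : ℝ) : Continuous (clipT T) := by
  unfold clipT; fun_prop

lemma clipT_T {T s : ℝ} (hT : 0 < T) (h : T ≤ s) : clipT T s = T := by
  simp [clipT, h, hT.le]

noncomputable def gridT (n : ℕ) (t : ℝ) : ℝ := ((⌊((n:ℝ)+1) * t⌋ : ℝ) + 1) / ((n:ℝ)+1)

lemma gridT_gt (n : ℕ) (t : ℝ) : t < gridT n t := by
  have h : (0:ℝ) < (n:ℝ)+1 := by positivity
  rw [gridT, lt_div_iff₀ h, mul_comm]
  exact Int.lt_floor_add_one _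

lemma gridT_le (n : ℕ) (t : ℝ) : gridT n t ≤ t + 1 / ((n:ℝ)+1) := by
  have h : (0:ℝ) < (n:ℝ)+1 := by positivity
  have h2 := Int.floor_le (((n:ℝ)+1) * t)
  rw [gridT, div_le_iff₀ h]
  have h3 : (t + 1 / ((n:ℝ)+1)) * ((n:ℝ)+1) = ((n:ℝ)+1) * t + 1 := by field_simp
  linarith

lemma gridT_tendsto (t : ℝ) : Tendsto (fun n => gridT n t) atTop (𝓝 t) := by
  refine tendsto_of_tendsto_of_tendsto_of_le_of_le tendsto_const_nhds ?_
    (fun n => (gridT_gt n t).le) (fun n => gridT_le n t)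
  simpa using (tendsto_one_div_add_atTop_nhds_zero_nat (𝕜 := ℝ)).const_add t

lemma measurable_evalD_joint {T : ℝ} (hT : 0 < T) {d : ℕ} :
    Measurable (fun p : Dspace T d × ℝ => p.1.1 (clipT T p.2)) := by
  refine measurable_of_tendsto_metrizable
    (f := fun n (p : Dspace T d × ℝ) => p.1.1 (clipT T (gridT n (clipT T p.2)))) ?_ ?_
  · intro n
    have h1 : Measurable (fun q : Dspace T d × ℤ =>
        q.1.1 (clipT T (((q.2 : ℝ) + 1) / ((n:ℝ)+1)))) :=
      measurable_from_prod_countable_left fun k =>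
        measurable_evalD (clipT_mem hT (((k : ℝ) + 1) / ((n:ℝ)+1)))
    have h2 : Measurable (fun p : Dspace T d × ℝ =>
        (p.1, ⌊((n:ℝ)+1) * clipT T p.2⌋)) := by
      refine measurable_fst.prodMk (Int.measurable_floor.comp ?_)
      exact ((clipT_continuous T).measurable.comp measurable_snd).const_mul _
    exact h1.comp h2
  · rw [tendsto_pi_nhds]
    rintro ⟨y, t'⟩
    obtain ⟨t, ht⟩ : ∃ t, t = clipT T t' := ⟨_, rfl⟩
    have htm : t ∈ Set.Icc (0:ℝ) T := ht ▸ clipT_mem hT t'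
    simp only [← ht]
    rcases htm.2.eq_or_lt with h | h
    · have : ∀ n, clipT T (gridT n t) = t := fun n => by
        rw [clipT_T hT (by have := gridT_gt n t; linarith), h]
      simp [this]
    · refine (y.2.1 t ⟨htm.1, h⟩).comp ?_
      rw [tendsto_nhdsWithin_iff]
      constructor
      · have := ((clipT_continuous T).tendsto t).comp (gridT_tendsto t)
        rwa [clipT_eq htm] at this
      · refine Eventually.of_forall fun n => ?_
        exact lt_max_of_lt_right (lt_min h (gridT_gt n t))

lemma measurable_erealPos : Measurable erealPos := by
  unfold erealPos
  exact Measurable.ite (measurableSet_singleton _) measurable_const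
    (ENNReal.measurable_ofReal.comp measurable_ereal_toReal)

/-- Integration against a measurable family of finite measures. -/
lemma measurable_lintegral_fam {X : Type*} [MeasurableSpace X] (μ : X → Measure ℝ)
    (hfin : ∀ x, IsFiniteMeasure (μ x))
    (hm : ∀ B : Set ℝ, MeasurableSet B → Measurable fun x => μ x B)
    (f : X × ℝ → ℝ≥0∞) (hf : Measurable f) :
    Measurable fun x => ∫⁻ t, f (x, t) ∂(μ x) := by
  let κ : ProbabilityTheory.Kernel X ℝ :=
    ⟨fun x => (μ x univ)⁻¹ • μ x, by
      refine Measure.measurable_of_measurable_coe _ fun s hs => ?_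
      simp only [Measure.smul_apply, smul_eq_mul]
      exact (hm univ MeasurableSet.univ).inv.mul (hm s hs)⟩
  have hκ : ∀ x, κ x = (μ x univ)⁻¹ • μ x := fun x => rfl
  haveI : ProbabilityTheory.IsFiniteKernel κ := ⟨1, ENNReal.one_lt_top, fun x => by
    rw [hκ]; simp [ENNReal.inv_mul_le_one]⟩
  have h1 : Measurable fun x => ∫⁻ t, f (x, t) ∂(κ x) := hf.lintegral_kernel_prod_right'
  have h2 := (hm univ MeasurableSet.univ).mul h1
  convert h2 using 2 with x
  simp only [Pi.mul_apply]
  rw [hκ, lintegral_smul_measure, smul_eq_mul, ← mul_assoc]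
  by_cases h0 : μ x univ = 0
  · have : μ x = 0 := Measure.measure_univ_eq_zero.1 h0
    simp [this]
  · haveI := hfin x
    rw [ENNReal.mul_inv_cancel h0 (measure_ne_top _ _), one_mul]

/-- A normal integrand is jointly measurable. -/
lemma measurable_normal {Ω : Type*} [MeasurableSpace Ω] {d : ℕ} (T : ℝ)
    (h : Ω → ℝ → Euc d → EReal)
    (hcl : ∀ ω : Ω, ∀ t ∈ Set.Icc (0:ℝ) T,
      IsClosed {p : Euc d × ℝ | h ω t p.1 ≤ (p.2 : EReal)})
    (hmeas : ∀ O : Set (Euc d × ℝ), IsOpen O →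
      MeasurableSet {p : Ω × ℝ | p.2 ∈ Set.Icc (0:ℝ) T ∧
        ∃ q ∈ O, h p.1 p.2 q.1 ≤ (q.2 : EReal)}) :
    Measurable (fun p : (Ω × ℝ) × Euc d =>
      if p.1.2 ∈ Set.Icc (0:ℝ) T then h p.1.1 p.1.2 p.2 else 0) := by
  have hI : MeasurableSet {p : (Ω × ℝ) × Euc d | p.1.2 ∈ Set.Icc (0:ℝ) T} :=
    (measurable_snd.comp measurable_fst) measurableSet_Icc
  have key : ∀ a : ℝ, MeasurableSet {p : (Ω × ℝ) × Euc d |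
      p.1.2 ∈ Set.Icc (0:ℝ) T ∧ h p.1.1 p.1.2 p.2 ≤ (a : EReal)} := by
    intro a
    have : {p : (Ω × ℝ) × Euc d |
        p.1.2 ∈ Set.Icc (0:ℝ) T ∧ h p.1.1 p.1.2 p.2 ≤ (a : EReal)} =
      ⋂ n : ℕ, ⋃ k : ℕ, 
        {p : Ω × ℝ | p.2 ∈ Set.Icc (0:ℝ) T ∧
          ∃ q ∈ Metric.ball (TopologicalSpace.denseSeq (Euc d × ℝ) k) (1 / ((n:ℝ)+1)),
          h p.1 p.2 q.1 ≤ (q.2 : EReal)} ×ˢ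
        {x : Euc d | (x, a) ∈
          Metric.ball (TopologicalSpace.denseSeq (Euc d × ℝ) k) (1 / ((n:ℝ)+1))} := by
      ext ⟨⟨ω, t⟩, x⟩
      simp only [mem_ofPred_eq, mem_iInter, mem_iUnion, mem_prod]
      constructor
      · rintro ⟨ht, hle⟩ n
        have hpos : (0:ℝ) < 1 / ((n:ℝ)+1) := by positivity
        obtain ⟨k, hk⟩ := (TopologicalSpace.denseRange_denseSeq (Euc d × ℝ)).exists_dist_lt
          (x, a) hpos
        exact ⟨k, ⟨ht, (x, a), hk, hle⟩, hk⟩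
      · intro H
        have ht : t ∈ Set.Icc (0:ℝ) T := by
          obtain ⟨k, h1, _⟩ := H 0
          exact h1.1
        refine ⟨ht, ?_⟩
        have : (x, a) ∈ closure {p : Euc d × ℝ | h ω t p.1 ≤ (p.2 : EReal)} := by
          rw [Metric.mem_closure_iff]
          intro ε hε
          obtain ⟨n, hn⟩ := exists_nat_one_div_lt (half_pos hε)
          obtain ⟨k, ⟨_, q, hq, hle⟩, hx⟩ := H n
          refine ⟨q, hle, ?_⟩
          have h1 := dist_triangle_right (x, a) q (TopologicalSpace.denseSeq (Euc d × ℝ) k)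
          rw [Metric.mem_ball] at hq hx
          linarith
        rw [(hcl ω t ht).closure_eq] at this
        exact this
    rw [this]
    refine MeasurableSet.iInter fun n => MeasurableSet.iUnion fun k => ?_
    refine (hmeas _ Metric.isOpen_ball).prod ?_
    exact (Metric.isOpen_ball.preimage (by fun_prop : Continuous fun x : Euc d => (x, a))).measurableSet
  have key2 : ∀ a : ℝ, MeasurableSet {p : (Ω × ℝ) × Euc d |
      (if p.1.2 ∈ Set.Icc (0:ℝ) T then h p.1.1 p.1.2 p.2 else 0) ≤ (a : EReal)} := by
    intro a
    have : {p : (Ω × ℝ) × Euc d |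
      (if p.1.2 ∈ Set.Icc (0:ℝ) T then h p.1.1 p.1.2 p.2 else 0) ≤ (a : EReal)} =
      {p : (Ω × ℝ) × Euc d |
        p.1.2 ∈ Set.Icc (0:ℝ) T ∧ h p.1.1 p.1.2 p.2 ≤ (a : EReal)} ∪
      ({p : (Ω × ℝ) × Euc d | p.1.2 ∈ Set.Icc (0:ℝ) T}ᶜ ∩ {_p | (0 : EReal) ≤ a}) := by
      ext p
      by_cases hp : p.1.2 ∈ Set.Icc (0:ℝ) T
      · simp only [mem_ofPred_eq, mem_union, mem_inter_iff, mem_compl_iff, if_pos hp]; tauto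
      · simp only [mem_ofPred_eq, mem_union, mem_inter_iff, mem_compl_iff, if_neg hp]; tauto
    rw [this]
    exact (key a).union (hI.compl.inter (MeasurableSet.const _))
  refine measurable_of_Iio fun b => ?_
  have : ∀ f : (Ω × ℝ) × Euc d → EReal, f ⁻¹' Iio b =
      ⋃ r : {r : ℚ // ((r : ℝ) : EReal) < b}, {p | f p ≤ ((r.1 : ℝ) : EReal)} := by
    intro f
    ext p
    simp only [mem_preimage, mem_Iio, mem_iUnion, mem_ofPred_eq, Subtype.exists, exists_prop]
    constructor
    · intro hp
      obtain ⟨r, h1, h2⟩ := EReal.lt_iff_exists_rat_btwn.1 hp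
      exact ⟨r, h2, h1.le⟩
    · rintro ⟨r, h1, h2⟩
      exact h2.trans_lt h1
  rw [this]
  exact MeasurableSet.iUnion fun r => key2 _

/-- **Joint measurability of the integral functional** (Lemma 4.1): for a normal
integrand `h` on `Ω × [0,T] × ℝ^d` and a random nonnegative (Radon) measure `μ` on
`[0,T]`, the map `(ω,y) ↦ I_h(ω,y) = ∫ h_t(y_t,ω) dμ(ω)(t)` is `F ⊗ B(D)`-measurable. -/
theorem statement5 {Ω : Type*} [mΩ : MeasurableSpace Ω] {d : ℕ} (T : ℝ) (hT : 0 < T)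
    (μ : Ω → Measure ℝ) (hμfin : ∀ ω, IsFiniteMeasure (μ ω))
    (hμconc : ∀ ω, μ ω (Set.Icc (0:ℝ) T)ᶜ = 0)
    (hμmeas : ∀ B : Set ℝ, MeasurableSet B → Measurable fun ω => μ ω B)
    (h : Ω → ℝ → Euc d → EReal)
    -- the epigraphical mapping of `h` is closed-valued ...
    (hcl : ∀ ω : Ω, ∀ t ∈ Set.Icc (0:ℝ) T,
      IsClosed {p : Euc d × ℝ | h ω t p.1 ≤ (p.2 : EReal)})
    -- ... and `F ⊗ B([0,T])`-measurable
    (hmeas : ∀ O : Set (Euc d × ℝ), IsOpen O →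
      MeasurableSet {p : Ω × ℝ | p.2 ∈ Set.Icc (0:ℝ) T ∧
        ∃ q ∈ O, h p.1 p.2 q.1 ≤ (q.2 : EReal)}) :
    @Measurable (Ω × Dspace T d) EReal (mΩ.prod (Dsigma T d)) _
      (fun p => eIntegral (μ p.1) fun t => h p.1 t (p.2.1 t)) := by
  have hN := measurable_normal T h hcl hmeas
  have hE := measurable_evalD_joint hT (d := d)
  have hF : Measurable (fun q : (Ω × Dspace T d) × ℝ =>
      if q.2 ∈ Set.Icc (0:ℝ) T then h q.1.1 q.2 (q.1.2.1 (clipT T q.2)) else 0) := by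
    have h1 : Measurable (fun q : (Ω × Dspace T d) × ℝ =>
      ((q.1.1, q.2), q.1.2.1 (clipT T q.2))) :=
      ((measurable_fst.comp measurable_fst).prodMk measurable_snd).prodMk
        (hE.comp ((measurable_snd.comp measurable_fst).prodMk measurable_snd))
    exact hN.comp h1
  have hm' : ∀ B : Set ℝ, MeasurableSet B →
      Measurable fun p : Ω × Dspace T d => μ p.1 B :=
    fun B hB => (hμmeas B hB).comp measurable_fst
  have hae : ∀ p : Ω × Dspace T d, ∀ᵐ t ∂(μ p.1), h p.1 t (p.2.1 t) =
      if t ∈ Set.Icc (0:ℝ) T then h p.1 t (p.2.1 (clipT T t)) else 0 := by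
    intro p
    have : ∀ᵐ t ∂(μ p.1), t ∈ Set.Icc (0:ℝ) T := hμconc p.1
    filter_upwards [this] with t ht
    rw [if_pos ht, clipT_eq ht]
  have hP : Measurable fun p : Ω × Dspace T d =>
      ∫⁻ t, erealPos (h p.1 t (p.2.1 t)) ∂(μ p.1) := by
    have := measurable_lintegral_fam (fun p : Ω × Dspace T d => μ p.1) (fun p => hμfin p.1) hm' _
      (measurable_erealPos.comp hF)
    convert this using 2 with p
    refine lintegral_congr_ae ?_
    filter_upwards [hae p] with t ht
    rw [ht]; rfl
  have hM : Measurable fun p : Ω × Dspace T d =>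
      ∫⁻ t, erealPos (-h p.1 t (p.2.1 t)) ∂(μ p.1) := by
    have := measurable_lintegral_fam (fun p : Ω × Dspace T d => μ p.1) (fun p => hμfin p.1) hm' _
      (measurable_erealPos.comp (continuous_neg.measurable.comp hF))
    convert this using 2 with p
    refine lintegral_congr_ae ?_
    filter_upwards [hae p] with t ht
    rw [ht]; rfl
  have hfinal : Measurable (fun p : Ω × Dspace T d =>
      eIntegral (μ p.1) fun t => h p.1 t (p.2.1 t)) := by
    unfold eIntegral
    refine Measurable.ite (hP (measurableSet_singleton _)) measurable_const ?_
    exact hP.coe_ereal_ennreal.sub hM.coe_ereal_ennreal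
  exact hfinal
end
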